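/- Let n ≥ 2. For all pairwise distinct i, j, k ∈ {0,…,n−1}, one has τ̃_{i,j}·τ̃_{j,k}·τ̃_{i,j} = τ̃_{j,k}·τ̃_{i,j}·τ̃_{j,k} = τ̃_{i,k} in S̃_n. -/

import Mathlib

open Equiv

/-- Generator `z` as an element of the free group. -/
def zF (n : ℕ) : FreeGroup (Fin (n-1) ⊕ Unit) := FreeGroup.of (Sum.inr ())

/-- Generator `τ̃ᵢ` as an element of the free group. -/
def tF (n : ℕ) (i : Fin (n-1)) : FreeGroup (Fin (n-1) ⊕ Unit) := FreeGroup.of (Sum.inl i)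

/-- Relations of the spin extension of the symmetric group. -/
def spinRels (n : ℕ) : Set (FreeGroup (Fin (n-1) ⊕ Unit)) :=
  {zF n * zF n} ∪
  {w | ∃ i : Fin (n-1), w = zF n * tF n i * (tF n i * zF n)⁻¹} ∪
  {w | ∃ i : Fin (n-1), w = tF n i * tF n i * (zF n)⁻¹} ∪
  {w | ∃ i j : Fin (n-1), 1 < |(i : ℤ) - (j : ℤ)| ∧ w = tF n i * tF n j * (zF n * tF n j * tF n i)⁻¹} ∪
  {w | ∃ i j : Fin (n-1), (j : ℕ) = (i : ℕ) + 1 ∧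
        w = tF n i * tF n j * tF n i * (tF n j * tF n i * tF n j)⁻¹}

/-- The spin extension `S̃ₙ` of the symmetric group, as a presented group. -/
abbrev SpinSym (n : ℕ) := PresentedGroup (spinRels n)

/-- The central element `z` of `S̃ₙ`. -/
def zt (n : ℕ) : SpinSym n := PresentedGroup.of (Sum.inr ())

/-- The generator `τ̃ᵢ` of `S̃ₙ`. -/
def tt (n : ℕ) (i : Fin (n-1)) : SpinSym n := PresentedGroup.of (Sum.inl i)

/-- `i` as an element of `Fin n`. -/
def finL (n : ℕ) (i : Fin (n-1)) : Fin n := ⟨i, by have := i.2; omega⟩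

/-- `i+1` as an element of `Fin n`. -/
def finR (n : ℕ) (i : Fin (n-1)) : Fin n := ⟨(i : ℕ) + 1, by have := i.2; omega⟩

/-- `τ̃ₖ` for a natural number index, `1` out of range. -/
def ttN (n : ℕ) (k : ℕ) : SpinSym n := if h : k < n - 1 then tt n ⟨k, h⟩ else 1

/-- For `i ≤ j`, the word `τ̃ᵢ·τ̃ᵢ₊₁⋯τ̃ⱼ₋₂·τ̃ⱼ₋₁·τ̃ⱼ₋₂⋯τ̃ᵢ₊₁·τ̃ᵢ` (equal to `1` when `i = j`). -/
def ttilCore (n i j : ℕ) : SpinSym n :=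
  (((List.range' i (j - i)) ++ (List.range' i (j - 1 - i)).reverse).map (ttN n)).prod

/-- The lifted transpositions `τ̃_{i,j}`, with `τ̃_{j,i} = z·τ̃_{i,j}` for `i < j`,
and `τ̃_{k,k} = 1`. -/
def ttil (n i j : ℕ) : SpinSym n := if j < i then zt n * ttilCore n j i else ttilCore n i j

section CentralInvolution

variable {G : Type*} [Group G] {z : G}

/-- If `z` is a central involution and `a`, `y` square to `z`, then so does `a * y * a`. -/
lemma mul_mul_mul_self_eq (hz : z * z = 1) (hc : ∀ x, x * z = z * x) {a y : G}
    (ha : a * a = z) (hy : y * y = z) : a * y * a * (a * y * a) = z := by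
  have hl (x w : G) : x * (z * w) = z * (x * w) := by rw [← mul_assoc, hc, mul_assoc]
  have ha' (w : G) : a * (a * w) = z * w := by rw [← mul_assoc, ha]
  have hy' (w : G) : y * (y * w) = z * w := by rw [← mul_assoc, hy]
  have hz' (w : G) : z * (z * w) = w := by rw [← mul_assoc, hz, one_mul]
  simp only [mul_assoc, ha, ha', hy', hl y, hz']

/-- An element commuting up to `z` with `b` and `y` commutes up to `z` with `b * y * b`. -/
lemma mul_mul_mul_eq_central_mul (hz : z * z = 1) (hc : ∀ x, x * z = z * x) {a b y : G}
    (hb : a * b = z * (b * a)) (hy : a * y = z * (y * a)) :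
    a * (b * y * b) = z * (b * y * b * a) := by
  have hl (x w : G) : x * (z * w) = z * (x * w) := by rw [← mul_assoc, hc, mul_assoc]
  have hb' (w : G) : a * (b * w) = z * (b * (a * w)) := by simp only [← mul_assoc, hb]
  have hy' (w : G) : a * (y * w) = z * (y * (a * w)) := by simp only [← mul_assoc, hy]
  have hz' (w : G) : z * (z * w) = w := by rw [← mul_assoc, hz, one_mul]
  simp only [mul_assoc, hb, hb', hy', hl y, hz']

lemma conj_mul_mul_conj (hz : z * z = 1) (hc : ∀ x, x * z = z * x) {t a x : G}
    (ht : t * t = z) (hx : t * x = z * (x * t)) :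
    t * a * t * x * (t * a * t) = t * (a * x * a) * t := by
  have hl (x w : G) : x * (z * w) = z * (x * w) := by rw [← mul_assoc, hc, mul_assoc]
  have ht' (w : G) : t * (t * w) = z * w := by rw [← mul_assoc, ht]
  have hx' (w : G) : t * (x * w) = z * (x * (t * w)) := by simp only [← mul_assoc, hx]
  have hz' (w : G) : z * (z * w) = w := by rw [← mul_assoc, hz, one_mul]
  simp only [mul_assoc, ht', hx', hl x, hz']

lemma mul_conj_mul (hc : ∀ x, x * z = z * x) {t a x : G}
    (hx : t * x = z * (x * t)) :
    x * (t * a * t) * x = t * (x * a * x) * t := by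
  have hl (x w : G) : x * (z * w) = z * (x * w) := by rw [← mul_assoc, hc, mul_assoc]
  have hx' (w : G) : t * (x * w) = z * (x * (t * w)) := by simp only [← mul_assoc, hx]
  simp only [mul_assoc, hx, hx', hl x, hl a, hl t]

/-- If `a`, `b` and `b`, `y` satisfy braid relations and `a`, `y` commute up to `z`,
then `b * y * b` and `a` satisfy a braid relation. -/
lemma braid_conj (hz : z * z = 1) (hc : ∀ x, x * z = z * x) {a b y : G} (ha : a * a = z)
    (hab : a * b * a = b * a * b) (hyb : y * b * y = b * y * b) (hy : a * y = z * (y * a)) :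
    b * y * b * a * (b * y * b) = a * (b * y * b) * a := by
  calc b * y * b * a * (b * y * b) = b * y * (b * a * b) * y * b := by group
    _ = b * (y * (a * b * a) * y) * b := by rw [← hab]; group
    _ = b * (a * (y * b * y) * a) * b := by rw [mul_conj_mul hc hy]
    _ = b * a * b * y * (b * a * b) := by rw [hyb]; group
    _ = a * b * a * y * (a * b * a) := by rw [hab]
    _ = a * (b * y * b) * a := conj_mul_mul_conj hz hc ha hy

end CentralInvolution

variable {n : ℕ}

lemma zt_mul_self : zt n * zt n = 1 :=
  PresentedGroup.one_of_mem (rels := spinRels n) (x := zF n * zF n)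
    (Or.inl (Or.inl (Or.inl (Or.inl rfl))))

lemma zt_mul_tt (i : Fin (n - 1)) : zt n * tt n i = tt n i * zt n :=
  PresentedGroup.mk_eq_mk_of_mul_inv_mem (rels := spinRels n) (x := zF n * tF n i)
    (y := tF n i * zF n) (Or.inl (Or.inl (Or.inl (Or.inr ⟨i, rfl⟩))))

lemma tt_mul_self (i : Fin (n - 1)) : tt n i * tt n i = zt n :=
  PresentedGroup.mk_eq_mk_of_mul_inv_mem (rels := spinRels n) (x := tF n i * tF n i)
    (y := zF n) (Or.inl (Or.inl (Or.inr ⟨i, rfl⟩)))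

lemma tt_mul_tt {i j : Fin (n - 1)} (h : 1 < |(i : ℤ) - (j : ℤ)|) :
    tt n i * tt n j = zt n * tt n j * tt n i :=
  PresentedGroup.mk_eq_mk_of_mul_inv_mem (rels := spinRels n) (x := tF n i * tF n j)
    (y := zF n * tF n j * tF n i) (Or.inl (Or.inr ⟨i, j, h, rfl⟩))

lemma tt_braid {i j : Fin (n - 1)} (h : (j : ℕ) = (i : ℕ) + 1) :
    tt n i * tt n j * tt n i = tt n j * tt n i * tt n j :=
  PresentedGroup.mk_eq_mk_of_mul_inv_mem (rels := spinRels n)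
    (x := tF n i * tF n j * tF n i) (y := tF n j * tF n i * tF n j) (Or.inr ⟨i, j, h, rfl⟩)

lemma mul_zt (x : SpinSym n) : x * zt n = zt n * x := by
  have hx : x ∈ Subgroup.centralizer {zt n} := by
    have htop := PresentedGroup.closure_range_of (spinRels n)
    refine (htop ▸ (Subgroup.closure_le _).2 ?_ : (⊤ : Subgroup (SpinSym n)) ≤ _)
      (Subgroup.mem_top x)
    rintro _ ⟨i | u, rfl⟩
    · exact Subgroup.mem_centralizer_singleton_iff.2 (zt_mul_tt i).symm
    · exact Subgroup.mem_centralizer_singleton_iff.2 rfl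
  exact Subgroup.mem_centralizer_singleton_iff.1 hx

lemma ttN_mul_self {i : ℕ} (h : i + 1 < n) : ttN n i * ttN n i = zt n := by
  rw [ttN, dif_pos (by omega), tt_mul_self]

lemma ttN_mul_ttN {i j : ℕ} (hij : i + 2 ≤ j) (hj : j + 1 < n) :
    ttN n i * ttN n j = zt n * (ttN n j * ttN n i) := by
  rw [ttN, dif_pos (by omega), ttN, dif_pos (by omega), ← mul_assoc]
  refine tt_mul_tt ?_
  rw [lt_abs]
  right
  push_cast
  omega

lemma ttN_braid {i : ℕ} (h : i + 2 < n) :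
    ttN n i * ttN n (i + 1) * ttN n i = ttN n (i + 1) * ttN n i * ttN n (i + 1) := by
  rw [ttN, dif_pos (by omega), ttN, dif_pos (by omega)]
  exact tt_braid rfl

lemma ttilCore_succ (i : ℕ) : ttilCore n i (i + 1) = ttN n i := by
  simp [ttilCore]

lemma ttilCore_of_lt {i j : ℕ} (h : i + 1 < j) :
    ttilCore n i j = ttN n i * ttilCore n (i + 1) j * ttN n i := by
  obtain ⟨d, rfl⟩ := Nat.exists_eq_add_of_lt h
  have h₁ : i + 1 + d + 1 - i = d + 1 + 1 := by omega
  have h₂ : i + 1 + d + 1 - 1 - i = d + 1 := by omega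
  have h₃ : i + 1 + d + 1 - (i + 1) = d + 1 := by omega
  have h₄ : i + 1 + d + 1 - 1 - (i + 1) = d := by omega
  rw [ttilCore, ttilCore, h₁, h₂, h₃, h₄, List.range'_succ (s := i) (n := d + 1),
    List.range'_succ (s := i) (n := d)]
  simp [mul_assoc]

/-- Induction principle following the recursion of `ttilCore` in its first argument. -/
lemma lt_rec_left {j : ℕ} {p : ∀ i, i < j → Prop}
    (base : ∀ i (h : i + 1 = j), p i (by omega))
    (step : ∀ i (h : i + 1 < j), p (i + 1) h → p i (by omega)) (i : ℕ) (hij : i < j) :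
    p i hij := by
  rcases Nat.lt_or_ge (i + 1) j with h | h
  · exact step i h (lt_rec_left base step (i + 1) h)
  · exact base i (by omega)
termination_by j - i

lemma ttilCore_mul_self {i j : ℕ} (hij : i < j) (hj : j < n) :
    ttilCore n i j * ttilCore n i j = zt n := by
  induction i, hij using lt_rec_left with
  | base i h => subst h; rw [ttilCore_succ, ttN_mul_self hj]
  | step i h ih =>
    rw [ttilCore_of_lt h]
    exact mul_mul_mul_self_eq zt_mul_self mul_zt (ttN_mul_self (by omega)) ih

lemma ttN_mul_ttilCore {i j k : ℕ} (hij : i + 2 ≤ j) (hjk : j < k) (hk : k < n) :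
    ttN n i * ttilCore n j k = zt n * (ttilCore n j k * ttN n i) := by
  induction j, hjk using lt_rec_left with
  | base j h => subst h; rw [ttilCore_succ, ttN_mul_ttN hij hk]
  | step j h ih =>
    rw [ttilCore_of_lt h]
    exact mul_mul_mul_eq_central_mul zt_mul_self mul_zt (ttN_mul_ttN hij (by omega))
      (ih (by omega))

lemma ttilCore_mul_ttN_mul_ttilCore {i k : ℕ} (hik : i + 1 < k) (hk : k < n) :
    ttilCore n (i + 1) k * ttN n i * ttilCore n (i + 1) k = ttilCore n i k := by
  rw [ttilCore_of_lt hik]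
  rcases Nat.lt_or_ge (i + 2) k with h | h
  · have ih := ttilCore_mul_ttN_mul_ttilCore h hk
    rw [ttilCore_of_lt h] at ih ⊢
    exact braid_conj zt_mul_self mul_zt (ttN_mul_self (by omega)) (ttN_braid (by omega)) ih
      (ttN_mul_ttilCore le_rfl h hk)
  · obtain rfl : k = i + 1 + 1 := by omega
    rw [ttilCore_succ, ttN_braid hk]
termination_by k - i

lemma ttilCore_braid {i j k : ℕ} (hij : i < j) (hjk : j < k) (hk : k < n) :
    ttilCore n i j * ttilCore n j k * ttilCore n i j = ttilCore n i k ∧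
    ttilCore n j k * ttilCore n i j * ttilCore n j k = ttilCore n i k := by
  induction i, hij using lt_rec_left with
  | base i h =>
    subst h
    rw [ttilCore_succ]
    exact ⟨(ttilCore_of_lt hjk).symm, ttilCore_mul_ttN_mul_ttilCore hjk hk⟩
  | step i h ih =>
    have hx := ttN_mul_ttilCore (n := n) (i := i) (by omega) hjk hk
    rw [ttilCore_of_lt h, ttilCore_of_lt (h.trans hjk),
      conj_mul_mul_conj zt_mul_self mul_zt (ttN_mul_self (by omega)) hx,
      mul_conj_mul mul_zt hx, ih.1, ih.2]
    exact ⟨rfl, rfl⟩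

lemma ttil_swap {i j : ℕ} (hij : i ≠ j) : ttil n j i = zt n * ttil n i j := by
  rcases hij.lt_or_gt with h | h
  · rw [ttil, if_pos h, ttil, if_neg h.not_gt]
  · rw [ttil, if_neg h.not_gt, ttil, if_pos h, ← mul_assoc, zt_mul_self, one_mul]

lemma ttil_mul_self {i j : ℕ} (hij : i ≠ j) (hi : i < n) (hj : j < n) :
    ttil n i j * ttil n i j = zt n := by
  rcases hij.lt_or_gt with h | h
  · rw [ttil, if_neg h.not_gt, ttilCore_mul_self h hj]
  · rw [ttil, if_pos h, mul_assoc, ← mul_assoc _ (zt n), mul_zt, mul_assoc,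
      ttilCore_mul_self h hi, zt_mul_self, mul_one]

/-- The two braid relations satisfied by the lifted transpositions on `i`, `j`, `k`. -/
def TtilBraid (n i j k : ℕ) : Prop :=
  ttil n i j * ttil n j k * ttil n i j = ttil n i k ∧
  ttil n j k * ttil n i j * ttil n j k = ttil n i k

lemma ttilBraid_of_lt {i j k : ℕ} (hij : i < j) (hjk : j < k) (hk : k < n) :
    TtilBraid n i j k := by
  simp only [TtilBraid, ttil, if_neg hij.not_gt, if_neg hjk.not_gt, if_neg (hij.trans hjk).not_gt]
  exact ttilCore_braid hij hjk hk

lemma TtilBraid.reverse {i j k : ℕ} (hij : i ≠ j) (hjk : j ≠ k) (hik : i ≠ k)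
    (h : TtilBraid n i j k) : TtilBraid n k j i := by
  have hl (x w : SpinSym n) : x * (zt n * w) = zt n * (x * w) := by
    rw [← mul_assoc, mul_zt, mul_assoc]
  have hz (w : SpinSym n) : zt n * (zt n * w) = w := by
    rw [← mul_assoc, zt_mul_self, one_mul]
  rw [TtilBraid, ttil_swap hij, ttil_swap hjk, ttil_swap hik]
  refine ⟨?_, ?_⟩
  · rw [← h.2]
    simp only [mul_assoc, hl (ttil n i j), hl (ttil n j k), hz]
  · rw [← h.1]
    simp only [mul_assoc, hl (ttil n i j), hl (ttil n j k), hz]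

lemma TtilBraid.swap_right {i j k : ℕ} (hij : i ≠ j) (hjk : j ≠ k) (hi : i < n) (hj : j < n)
    (hk : k < n) (h : TtilBraid n i j k) : TtilBraid n i k j := by
  have hl (x w : SpinSym n) : x * (zt n * w) = zt n * (x * w) := by
    rw [← mul_assoc, mul_zt, mul_assoc]
  have hz (w : SpinSym n) : zt n * (zt n * w) = w := by
    rw [← mul_assoc, zt_mul_self, one_mul]
  have hp := ttil_mul_self hij hi hj
  have hq := ttil_mul_self hjk hj hk
  have hp' (w : SpinSym n) : ttil n i j * (ttil n i j * w) = zt n * w := by rw [← mul_assoc, hp]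
  have hq' (w : SpinSym n) : ttil n j k * (ttil n j k * w) = zt n * w := by rw [← mul_assoc, hq]
  rw [TtilBraid, ttil_swap hjk]
  refine ⟨?_, ?_⟩
  · nth_rw 1 [← h.1]
    rw [← h.2]
    simp only [mul_assoc, hp', hq', hq, hl (ttil n i j), hl (ttil n j k), hz, mul_zt (ttil n i j)]
  · rw [← h.2]
    simp only [mul_assoc, hq', hq, hl (ttil n i j), hl (ttil n j k), hz, mul_zt (ttil n i j)]

theorem ttil_braid (n : ℕ) (hn : 2 ≤ n) (i j k : Fin n)
    (hij : i ≠ j) (hjk : j ≠ k) (hik : i ≠ k) :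
    ttil n i.val j.val * ttil n j.val k.val * ttil n i.val j.val = ttil n i.val k.val ∧
    ttil n j.val k.val * ttil n i.val j.val * ttil n j.val k.val = ttil n i.val k.val := by
  obtain ⟨i, hi⟩ := i
  obtain ⟨j, hj⟩ := j
  obtain ⟨k, hk⟩ := k
  simp only [ne_eq, Fin.mk.injEq] at hij hjk hik
  change TtilBraid n i j k
  have aux {a b c : ℕ} (hab : a < b) (hbc : b < c) (ha : a < n) (hb : b < n) (hc : c < n) :
      TtilBraid n a b c ∧ TtilBraid n a c b ∧ TtilBraid n c a b := by
    have h₁ := ttilBraid_of_lt hab hbc hc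
    have h₂ := h₁.swap_right hab.ne hbc.ne ha hb hc
    have h₃ := (h₁.reverse hab.ne hbc.ne (hab.trans hbc).ne).swap_right hbc.ne' hab.ne' hc hb ha
    exact ⟨h₁, h₂, h₃⟩
  rcases Nat.lt_or_gt_of_ne hij with h₁ | h₁ <;> rcases Nat.lt_or_gt_of_ne hjk with h₂ | h₂ <;>
    rcases Nat.lt_or_gt_of_ne hik with h₃ | h₃
  · exact (aux h₁ h₂ hi hj hk).1
  · omega
  · exact (aux h₃ h₂ hi hk hj).2.1
  · exact (aux h₃ h₁ hk hi hj).2.1.reverse (by omega) (by omega) (by omega)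
  · exact (aux h₁ h₃ hj hi hk).2.2.reverse (by omega) (by omega) (by omega)
  · exact (aux h₂ h₃ hj hk hi).2.2
  · omega
  · exact (aux h₂ h₁ hk hj hi).1.reverse (by omega) (by omega) (by omega)
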